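/- Let G=(V,E) be a 3-edge-connected cubic graph, and let X ⊆ V be such that the induced subgraph G[X] is connected. Let H be a component of G − X and let P ⊆ H be a nontrivial path with ends y₁, y₂. If P is peripheral in H, E(y_i, X) ≠ ∅ for i = 1, 2, and E(y, X) = ∅ for every other vertex y of P, then there exists a peripheral cycle C of G with C ∩ H = P. -/

import Mathlib

open scoped Classical

/-- A multigraph with an orientation: each edge `e` has a source `src e` and a target `tgt e`.
Loops and parallel edges are allowed. -/
structure Multigraph (V E : Type) where
  src : E → V
  tgt : E → V

namespace Multigraph

variable {V E : Type}

/-- `u` and `v` are joined by some edge satisfying the predicate `P`. -/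
def adjVia (G : Multigraph V E) (P : E → Prop) (u v : V) : Prop :=
  ∃ e, P e ∧ ((G.src e = u ∧ G.tgt e = v) ∨ (G.src e = v ∧ G.tgt e = u))

/-- `v` is reachable from `u` using only edges satisfying `P`. -/
def Reaches (G : Multigraph V E) (P : E → Prop) : V → V → Prop :=
  Relation.ReflTransGen (G.adjVia P)

/-- The graph is connected when only edges satisfying `P` are kept (all edges deleted
whose predicate fails, all vertices kept). -/
def ConnectedVia (G : Multigraph V E) (P : E → Prop) : Prop :=
  Nonempty V ∧ ∀ u v : V, G.Reaches P u v

def Connected (G : Multigraph V E) : Prop :=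
  G.ConnectedVia fun _ => True

/-- `G` is `k`-edge-connected: it is connected and has no edge cut of size less than `k`;
equivalently, deleting any set of fewer than `k` edges leaves it connected. -/
def EdgeConnected (G : Multigraph V E) (k : ℕ) : Prop :=
  ∀ S : Set E, S.ncard < k → G.ConnectedVia fun e => e ∉ S

/-- The degree of a vertex (loops counted twice). -/
noncomputable def degree (G : Multigraph V E) (v : V) : ℕ :=
  {e | G.src e = v}.ncard + {e | G.tgt e = v}.ncard

/-- Every vertex has degree exactly 3. -/
def Cubic (G : Multigraph V E) : Prop :=
  ∀ v : V, G.degree v = 3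

/-- `φ : E → Γ` is a flow: at every vertex, the sum over outgoing edges equals the
sum over incoming edges. -/
def IsFlow [Fintype E] {Γ : Type} [AddCommGroup Γ] (G : Multigraph V E) (φ : E → Γ) : Prop :=
  ∀ v : V, (∑ e : E, if G.src e = v then φ e else 0) = ∑ e : E, if G.tgt e = v then φ e else 0

/-- The vertex `v` is an endpoint of some edge of `C`. -/
def touches (G : Multigraph V E) (C : Set E) (v : V) : Prop :=
  ∃ e ∈ C, G.src e = v ∨ G.tgt e = v

/-- An edge set `C` is (the edge set of) a cycle: it is nonempty, every vertex it touches
has degree exactly 2 in it, and it is connected. -/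
def IsCycle (G : Multigraph V E) (C : Set E) : Prop :=
  C.Nonempty ∧
  (∀ v : V, G.touches C v →
    ({e ∈ C | G.src e = v}.ncard + {e ∈ C | G.tgt e = v}.ncard = 2)) ∧
  (∀ u v : V, G.touches C u → G.touches C v → G.Reaches (· ∈ C) u v)

/-- `R` is `k`-closed: every cycle with at least one edge outside `R` has at least
`k+1` edges outside `R`. -/
def Closed (G : Multigraph V E) (k : ℕ) (R : Set E) : Prop :=
  ∀ C : Set E, G.IsCycle C → (C \ R).Nonempty → k + 1 ≤ (C \ R).ncard

/-- The `k`-closure `⟨S⟩ₖ` of `S` : the minimal `k`-closed set containing `S`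
(the family of `k`-closed sets is closed under intersections). -/
def kClosure (G : Multigraph V E) (k : ℕ) (S : Set E) : Set E :=
  ⋂₀ {R : Set E | S ⊆ R ∧ G.Closed k R}

/-- `S` is a `k`-base: its `k`-closure is the whole edge set. -/
def IsBase (G : Multigraph V E) (k : ℕ) (S : Set E) : Prop :=
  G.kClosure k S = Set.univ

/-- An edge set `S` is peripheral if `G − S` is connected. -/
def Peripheral (G : Multigraph V E) (S : Set E) : Prop :=
  G.ConnectedVia fun e => e ∉ S

/-- The spanning subgraph `(V, F)` is a forest, i.e. contains no cycle. -/
def IsForest (G : Multigraph V E) (F : Set E) : Prop :=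
  ∀ C : Set E, G.IsCycle C → ¬ C ⊆ F

/-- `vs`, `es` describe a path: distinct vertices `vs 0, …, vs n` and distinct edges
`es 0, …, es (n-1)` where `es i` joins `vs i` and `vs (i+1)`. -/
def IsPath (G : Multigraph V E) {n : ℕ} (vs : Fin (n + 1) → V) (es : Fin n → E) : Prop :=
  Function.Injective vs ∧ Function.Injective es ∧
  ∀ i : Fin n,
    (G.src (es i) = vs i.castSucc ∧ G.tgt (es i) = vs i.succ) ∨
    (G.src (es i) = vs i.succ ∧ G.tgt (es i) = vs i.castSucc)

/-- The edge `e` has `y` as one endpoint and its other endpoint in `X`,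
i.e. `e ∈ E(y, X)`. -/
def joins (G : Multigraph V E) (e : E) (y : V) (X : Set V) : Prop :=
  (G.src e = y ∧ G.tgt e ∈ X) ∨ (G.tgt e = y ∧ G.src e ∈ X)

/-- `W` is the vertex set of a connected component of `G − X`. -/
def IsComponent (G : Multigraph V E) (X W : Set V) : Prop :=
  W.Nonempty ∧ Disjoint W X ∧
  (∀ u ∈ W, ∀ v : V, v ∉ X → G.adjVia (fun _ => True) u v → v ∈ W) ∧
  (∀ u ∈ W, ∀ v ∈ W, G.Reaches (fun e => G.src e ∉ X ∧ G.tgt e ∉ X) u v)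

/-- The subgraph induced on `W`, with only those of its edges satisfying `P` kept,
is connected. -/
def ConnectedOn (G : Multigraph V E) (W : Set V) (P : E → Prop) : Prop :=
  ∀ u ∈ W, ∀ v ∈ W, G.Reaches (fun e => P e ∧ G.src e ∈ W ∧ G.tgt e ∈ W) u v

/-- The subgraph induced on `W` is `k`-edge-connected. -/
def EdgeConnectedOn (G : Multigraph V E) (W : Set V) (k : ℕ) : Prop :=
  ∀ S : Set E, S.ncard < k → G.ConnectedOn W fun e => e ∉ S

/-- Some cycle lies entirely inside the vertex set `X`. -/
def HasCycleIn (G : Multigraph V E) (X : Set V) : Prop :=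
  ∃ C : Set E, G.IsCycle C ∧ ∀ e ∈ C, G.src e ∈ X ∧ G.tgt e ∈ X

/-- The edge cut `E(X, V \ X)`. -/
def cutEdges (G : Multigraph V E) (X : Set V) : Set E :=
  {e | (G.src e ∈ X ∧ G.tgt e ∉ X) ∨ (G.src e ∉ X ∧ G.tgt e ∈ X)}

/-- A cubic graph is cyclically `k`-edge-connected if every edge cut separating two
cycle-containing parts has at least `k` edges. -/
def CyclicallyEdgeConnected (G : Multigraph V E) (k : ℕ) : Prop :=
  ∀ X : Set V, G.HasCycleIn X → G.HasCycleIn Xᶜ → k ≤ (G.cutEdges X).ncard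

/-- `G` is 3-connected: more than 3 vertices, connected, and still connected after
deleting any two vertices. -/
def ThreeConnected [Fintype V] (G : Multigraph V E) : Prop :=
  3 < Fintype.card V ∧ G.Connected ∧
    ∀ u v : V, G.ConnectedOn {w : V | w ≠ u ∧ w ≠ v} fun _ => True

/-- The graph `G − r` obtained by deleting the vertex `r` and all incident edges. -/
def deleteVertex (G : Multigraph V E) (r : V) :
    Multigraph {v : V // v ≠ r} {e : E // G.src e ≠ r ∧ G.tgt e ≠ r} where
  src e := ⟨G.src e.1, e.2.1⟩
  tgt e := ⟨G.tgt e.1, e.2.2⟩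

end Multigraph

namespace Multigraph

variable {V E : Type} {G : Multigraph V E}

theorem adjVia.symm {P : E → Prop} {u v : V} (h : G.adjVia P u v) : G.adjVia P v u := by
  obtain ⟨e, he, h⟩ := h
  exact ⟨e, he, h.symm⟩

theorem Reaches.symm {P : E → Prop} {u v : V} (h : G.Reaches P u v) : G.Reaches P v u := by
  induction h with
  | refl => exact .refl
  | tail _ h ih => exact .head h.symm ih

theorem Reaches.mono {P Q : E → Prop} (hPQ : ∀ e, P e → Q e) {u v : V}
    (h : G.Reaches P u v) : G.Reaches Q u v :=
  Relation.ReflTransGen.mono (fun _ _ ⟨e, he, h⟩ => ⟨e, hPQ e he, h⟩) _ _ h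

theorem joins.exists_adjVia {P : E → Prop} {e : E} {y : V} {X : Set V} (h : G.joins e y X)
    (he : P e) : ∃ x ∈ X, G.adjVia P y x := by
  rcases h with ⟨hy, hx⟩ | ⟨hy, hx⟩
  · exact ⟨_, hx, e, he, Or.inl ⟨hy, rfl⟩⟩
  · exact ⟨_, hx, e, he, Or.inr ⟨rfl, hy⟩⟩

/-- A walk starting outside `S` either never uses the cut of `S`, or has an initial part which
enters `S` through a single cut edge. -/
theorem Reaches.avoids_cut_or_enters {S : Set V} {Q : Set E} {y z : V}
    (h : G.Reaches (· ∈ Q) y z) :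
    G.Reaches (· ∈ Q \ G.cutEdges S) y z ∨
      ∃ f ∈ Q, ∃ s ∈ S, G.Reaches (· ∈ insert f (Q \ G.cutEdges S)) y s := by
  induction h with
  | refl => exact Or.inl .refl
  | @tail u v _ huv ih =>
    rcases ih with ih | ih
    · obtain ⟨e, he, huv⟩ := huv
      by_cases hc : e ∈ G.cutEdges S
      · right
        have hu : G.Reaches (· ∈ insert e (Q \ G.cutEdges S)) y u :=
          ih.mono fun _ => Set.mem_insert_of_mem _
        have hv : G.Reaches (· ∈ insert e (Q \ G.cutEdges S)) y v :=
          hu.tail ⟨e, Set.mem_insert _ _, huv⟩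
        have : u ∈ S ∨ v ∈ S := by
          simp only [cutEdges, Set.mem_ofPred_eq] at hc
          grind
        rcases this with hs | hs
        · exact ⟨e, he, u, hs, hu⟩
        · exact ⟨e, he, v, hs, hv⟩
      · exact Or.inl (ih.tail ⟨e, ⟨he, hc⟩, huv⟩)
    · exact Or.inr ih

/-- A walk can be rerouted through a connected vertex set `S` so that at most two edges of the
cut of `S` are used. -/
theorem Reaches.exists_reroute {S : Set V} {Q : Set E} {y z : V}
    (hS : G.ConnectedOn S fun _ => True) (h : G.Reaches (· ∈ Q) y z) :
    ∃ D ⊆ Q, D.ncard ≤ 2 ∧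
      G.Reaches (· ∈ (Q \ G.cutEdges S) ∪ D ∪ {e | G.src e ∈ S ∧ G.tgt e ∈ S}) y z := by
  rcases h.avoids_cut_or_enters (S := S) with h₁ | ⟨f, hf, s, hs, h₁⟩
  · exact ⟨∅, Set.empty_subset _, by simp, h₁.mono fun e he => Or.inl (Or.inl he)⟩
  rcases h.symm.avoids_cut_or_enters (S := S) with h₂ | ⟨g, hg, t, ht, h₂⟩
  · exact ⟨∅, Set.empty_subset _, by simp, h₂.symm.mono fun e he => Or.inl (Or.inl he)⟩
  refine ⟨{f, g}, Set.pair_subset hf hg, ?_, ?_⟩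
  · exact (Set.ncard_insert_le f {g}).trans (by simp)
  have h₁' := h₁.mono (Q := (· ∈ (Q \ G.cutEdges S) ∪ {f, g} ∪
    {e | G.src e ∈ S ∧ G.tgt e ∈ S})) (by grind)
  have h₂' := h₂.symm.mono (Q := (· ∈ (Q \ G.cutEdges S) ∪ {f, g} ∪
    {e | G.src e ∈ S ∧ G.tgt e ∈ S})) (by grind)
  have h₃ := (hS s hs t ht).mono (Q := (· ∈ (Q \ G.cutEdges S) ∪ {f, g} ∪
    {e | G.src e ∈ S ∧ G.tgt e ∈ S})) (by grind)
  exact (h₁'.trans h₃).trans h₂'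

/-- The vertices outside `B` reachable from `v` while avoiding `B` induce a connected subgraph. -/
theorem connectedOn_avoiding (B : Set V) (v : V) :
    G.ConnectedOn {u | G.Reaches (fun e => G.src e ∉ B ∧ G.tgt e ∉ B) v u} fun _ => True := by
  have key : ∀ u, G.Reaches (fun e => G.src e ∉ B ∧ G.tgt e ∉ B) v u →
      G.Reaches (fun e => True ∧
        G.src e ∈ {u | G.Reaches (fun e => G.src e ∉ B ∧ G.tgt e ∉ B) v u} ∧
        G.tgt e ∈ {u | G.Reaches (fun e => G.src e ∉ B ∧ G.tgt e ∉ B) v u}) v u := by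
    intro u hu
    induction hu with
    | refl => exact .refl
    | @tail a b ha hab ih =>
      have hb := ha.tail hab
      obtain ⟨e, _, h⟩ := hab
      refine ih.tail ⟨e, ⟨trivial, ?_⟩, h⟩
      rcases h with ⟨rfl, rfl⟩ | ⟨rfl, rfl⟩
      · exact ⟨ha, hb⟩
      · exact ⟨hb, ha⟩
  intro s hs t ht
  exact (key s hs).symm.trans (key t ht)

/-- In a `k`-edge-connected graph, the cut of a nonempty proper vertex set has at least `k`
edges. -/
theorem EdgeConnected.le_ncard_cutEdges {k : ℕ} (hG : G.EdgeConnected k) {S : Set V} {u v : V}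
    (hu : u ∈ S) (hv : v ∉ S) : k ≤ (G.cutEdges S).ncard := by
  by_contra! hlt
  have h := (hG _ hlt).2 u v
  refine hv ?_
  clear hv
  induction h with
  | refl => exact hu
  | tail _ hab ih =>
    obtain ⟨e, he, h⟩ := hab
    simp only [cutEdges, Set.mem_ofPred_eq] at he
    grind

/-- In a 3-edge-connected graph let `P` be a set of edges inside `W` whose deletion
leaves `W` connected.
If `M` contains all edges missing `W` but no edge inside `W`, and `M` links `y ∈ W` to `z`,
then some `Q ⊆ M` links `y` to `z` with `P ∪ Q` peripheral. -/
theorem exists_peripheral_link [Fintype V] [Fintype E] (hG : G.EdgeConnected 3)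
    {W : Set V} {P M : Set E} {y z : V} (hy : y ∈ W)
    (hP : ∀ e ∈ P, G.src e ∈ W ∧ G.tgt e ∈ W) (hper : G.ConnectedOn W fun e => e ∉ P)
    (hM : ∀ e, G.src e ∉ W → G.tgt e ∉ W → e ∈ M)
    (hMW : ∀ e ∈ M, ¬(G.src e ∈ W ∧ G.tgt e ∈ W)) (hyz : G.Reaches (· ∈ M) y z) :
    ∃ Q ⊆ M, G.Reaches (· ∈ Q) y z ∧ G.Peripheral (P ∪ Q) := by
  let B : Set E → Set V := fun Q => {u | G.Reaches (· ∉ P ∪ Q) y u}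
  obtain ⟨Q, ⟨hQM, hQ⟩, hmax⟩ := Set.exists_max_image
    {Q : Set E | Q ⊆ M ∧ G.Reaches (· ∈ Q) y z} (fun Q => (B Q).ncard) (Set.toFinite _)
    ⟨M, subset_rfl, hyz⟩
  refine ⟨Q, hQM, hQ, ⟨y⟩, ?_⟩
  suffices hB : ∀ v, v ∈ B Q from fun u v => (hB u).symm.trans (hB v)
  by_contra! hne
  obtain ⟨v, hv⟩ := hne
  have hWB : W ⊆ B Q := fun w hw => (hper y hy w hw).mono fun e he =>
    fun h => h.elim he.1 fun hq => hMW e (hQM hq) he.2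
  let S : Set V := {u | G.Reaches (fun e => G.src e ∉ B Q ∧ G.tgt e ∉ B Q) v u}
  have hSB : ∀ s ∈ S, s ∉ B Q := by
    intro s hs
    induction hs with
    | refl => exact hv
    | tail _ h _ =>
      obtain ⟨e, he, h⟩ := h
      grind
  have hcut : ∀ e ∈ G.cutEdges S, ¬(G.src e ∉ B Q ∧ G.tgt e ∉ B Q) := by
    rintro e (⟨hs, ht⟩ | ⟨hs, ht⟩) hB
    · exact ht (hs.tail ⟨e, hB, Or.inl ⟨rfl, rfl⟩⟩)
    · exact hs (ht.tail ⟨e, hB, Or.inr ⟨rfl, rfl⟩⟩)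
  obtain ⟨D, hDQ, hD, hreach⟩ := hQ.exists_reroute (connectedOn_avoiding (B Q) v)
  change G.Reaches (· ∈ (Q \ G.cutEdges S) ∪ D ∪ {e | G.src e ∈ S ∧ G.tgt e ∈ S}) y z at hreach
  set Q' := (Q \ G.cutEdges S) ∪ D ∪ {e | G.src e ∈ S ∧ G.tgt e ∈ S} with hQ'
  have hQ'M : Q' ⊆ M := by
    rintro e ((he | he) | he)
    · exact hQM he.1
    · exact hQM (hDQ he)
    · exact hM e (fun h => hSB _ he.1 (hWB h)) (fun h => hSB _ he.2 (hWB h))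
  have hBB : B Q ⊆ B Q' := by
    intro u hu
    induction hu with
    | refl => exact .refl
    | tail ha hab ih =>
      obtain ⟨e, he, h⟩ := hab
      refine ih.tail ⟨e, ?_, h⟩
      rintro (hp | (hq | hq) | hq)
      · exact he (Or.inl hp)
      · exact he (Or.inr hq.1)
      · exact he (Or.inr (hDQ hq))
      · rcases h with ⟨rfl, rfl⟩ | ⟨rfl, rfl⟩
        · exact hSB _ hq.1 ha
        · exact hSB _ hq.2 ha
  have hcard : D.ncard < (G.cutEdges S).ncard :=
    lt_of_lt_of_le (by omega) (hG.le_ncard_cutEdges (S := S) (u := v) (v := y) .refl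
      fun h => hSB _ h .refl)
  obtain ⟨f, hf, hfD⟩ := Set.exists_mem_notMem_of_ncard_lt_ncard hcard
  have hfB := hcut f hf
  have hfP : f ∉ P := fun h => by
    have := hP f h
    rcases hf with hf | hf
    · exact hSB _ hf.1 (hWB this.1)
    · exact hSB _ hf.2 (hWB this.2)
  have hfQ' : f ∉ P ∪ Q' := by
    simp only [cutEdges, Set.mem_ofPred_eq] at hf
    simp only [hQ', cutEdges, Set.mem_union, Set.mem_sdiff, Set.mem_ofPred_eq]
    tauto
  have hlt : (B Q).ncard < (B Q').ncard := by
    refine Set.ncard_lt_ncard ⟨hBB, fun hsub => ?_⟩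
    rcases hf with ⟨hs, -⟩ | ⟨-, ht⟩
    · have hs' := hSB _ hs
      have ht' : G.tgt f ∈ B Q := by tauto
      exact hs' (hsub ((hBB ht').tail ⟨f, hfQ', Or.inr ⟨rfl, rfl⟩⟩))
    · have ht' := hSB _ ht
      have hs' : G.src f ∈ B Q := by tauto
      exact ht' (hsub ((hBB hs').tail ⟨f, hfQ', Or.inl ⟨rfl, rfl⟩⟩))
  exact absurd (hmax Q' ⟨hQ'M, hreach⟩) (not_le.mpr hlt)

/-- The degree of `v` in the spanning subgraph with edge set `F` (loops counted twice). -/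
noncomputable def degreeIn (G : Multigraph V E) (F : Set E) (v : V) : ℕ :=
  {e ∈ F | G.src e = v}.ncard + {e ∈ F | G.tgt e = v}.ncard

theorem ncard_sep_insert [Finite E] {F : Set E} {e : E} (he : e ∉ F) (p : E → Prop) :
    {f ∈ insert e F | p f}.ncard = {f ∈ F | p f}.ncard + if p e then 1 else 0 := by
  split_ifs with h
  · rw [← Set.ncard_insert_of_notMem (a := e) (by simp [he])]
    congr 1
    ext f
    simp only [Set.mem_ofPred_eq, Set.mem_insert_iff]
    grind
  · congr 1
    ext f
    simp only [Set.mem_ofPred_eq, Set.mem_insert_iff]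
    grind

theorem degreeIn_insert [Finite E] {F : Set E} {e : E} (he : e ∉ F) (v : V) :
    G.degreeIn (insert e F) v = G.degreeIn F v +
      ((if G.src e = v then 1 else 0) + if G.tgt e = v then 1 else 0) := by
  simp only [degreeIn, ncard_sep_insert he]
  omega

theorem degreeIn_union [Finite E] {F F' : Set E} (h : Disjoint F F') (v : V) :
    G.degreeIn (F ∪ F') v = G.degreeIn F v + G.degreeIn F' v := by
  have key : ∀ p : E → Prop,
      {e ∈ F ∪ F' | p e}.ncard = {e ∈ F | p e}.ncard + {e ∈ F' | p e}.ncard := by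
    intro p
    rw [← Set.ncard_union_eq (h.mono (Set.sep_subset _ _) (Set.sep_subset _ _))]
    congr 1
    ext e
    simp only [Set.mem_ofPred_eq, Set.mem_union]
    tauto
  simp only [degreeIn, key]
  omega

theorem touches_of_degreeIn_ne_zero {F : Set E} {v : V} (h : G.degreeIn F v ≠ 0) :
    G.touches F v := by
  by_contra hn
  refine h ?_
  have h₁ : {e ∈ F | G.src e = v} = ∅ :=
    Set.eq_empty_of_forall_notMem fun e he => hn ⟨e, he.1, Or.inl he.2⟩
  have h₂ : {e ∈ F | G.tgt e = v} = ∅ :=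
    Set.eq_empty_of_forall_notMem fun e he => hn ⟨e, he.1, Or.inr he.2⟩
  simp [degreeIn, h₁, h₂]

/-- `G.IsPathOn a b F T`: there is a path from `a` to `b` with edge set `F` and vertex set `T`. -/
inductive IsPathOn (G : Multigraph V E) : V → V → Set E → Set V → Prop
  | nil (a : V) : IsPathOn G a a ∅ {a}
  | cons {u a b : V} {e : E} {F : Set E} {T : Set V}
      (he : (G.src e = u ∧ G.tgt e = a) ∨ (G.src e = a ∧ G.tgt e = u)) (hu : u ∉ T)
      (h : IsPathOn G a b F T) : IsPathOn G u b (insert e F) (insert u T)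

namespace IsPathOn

variable {a b : V} {F : Set E} {T : Set V}

theorem left_mem (h : G.IsPathOn a b F T) : a ∈ T := by
  cases h <;> simp

theorem mem_of_touches (h : G.IsPathOn a b F T) {v : V} (hv : G.touches F v) : v ∈ T := by
  induction h with
  | nil a => simp [touches] at hv
  | @cons u a b e F T he hu h ih =>
    obtain ⟨f, rfl | hf, hfv⟩ := hv
    · have := h.left_mem
      grind
    · exact Or.inr (ih ⟨f, hf, hfv⟩)

theorem degreeIn_add [Finite E] (h : G.IsPathOn a b F T) (v : V) :
    G.degreeIn F v + (if a = v then 1 else 0) + (if b = v then 1 else 0) =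
      if v ∈ T then 2 else 0 := by
  induction h with
  | nil a =>
    simp only [degreeIn, Set.mem_empty_iff_false, false_and, Set.ofPred_false, Set.ncard_empty,
      Set.mem_singleton_iff]
    grind
  | @cons u a b e F T he hu h ih =>
    have heF : e ∉ F := fun hF => hu <| h.mem_of_touches <| by
      rcases he with ⟨he, -⟩ | ⟨-, he⟩
      · exact ⟨e, hF, Or.inl he⟩
      · exact ⟨e, hF, Or.inr he⟩
    rw [degreeIn_insert heF]
    have hua : u ≠ a := fun hua => hu (hua ▸ h.left_mem)
    by_cases huv : u = v
    · subst huv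
      simp only [hu, if_false] at ih
      grind
    · have : v ∈ insert u T ↔ v ∈ T := by simp [Ne.symm huv]
      simp only [this]
      rw [← ih]
      rcases he with ⟨rfl, rfl⟩ | ⟨rfl, rfl⟩ <;> simp [huv]

theorem reaches (h : G.IsPathOn a b F T) {v : V} (hv : v ∈ T) : G.Reaches (· ∈ F) a v := by
  induction h with
  | nil a => cases hv; exact .refl
  | @cons u a b e F T he hu h ih =>
    rcases hv with rfl | hv
    · exact .refl
    · exact Relation.ReflTransGen.head ⟨e, Set.mem_insert _ _, he⟩
        ((ih hv).mono fun _ => Set.mem_insert_of_mem _)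

theorem exists_suffix (h : G.IsPathOn a b F T) {v : V} (hv : v ∈ T) :
    ∃ F' ⊆ F, ∃ T', G.IsPathOn v b F' T' := by
  induction h with
  | nil a => cases hv; exact ⟨∅, subset_rfl, _, .nil _⟩
  | @cons u a b e F T he hu h ih =>
    rcases hv with rfl | hv
    · exact ⟨_, subset_rfl, _, .cons he hu h⟩
    · obtain ⟨F', hF', T', h'⟩ := ih hv
      exact ⟨F', hF'.trans (Set.subset_insert _ _), T', h'⟩

end IsPathOn

theorem Reaches.exists_isPathOn {Q : Set E} {a b : V} (h : G.Reaches (· ∈ Q) a b) :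
    ∃ F ⊆ Q, ∃ T, G.IsPathOn a b F T := by
  induction h using Relation.ReflTransGen.head_induction_on with
  | refl => exact ⟨∅, Set.empty_subset _, _, .nil b⟩
  | @head u a hua _ ih =>
    obtain ⟨F, hF, T, h⟩ := ih
    obtain ⟨e, he, hua⟩ := hua
    by_cases hu : u ∈ T
    · obtain ⟨F', hF', T', h'⟩ := h.exists_suffix hu
      exact ⟨F', hF'.trans hF, T', h'⟩
    · exact ⟨_, Set.insert_subset he hF, _, .cons hua hu h⟩

theorem IsPath.isPathOn {n : ℕ} {vs : Fin (n + 1) → V} {es : Fin n → E} (h : G.IsPath vs es) :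
    G.IsPathOn (vs 0) (vs (Fin.last n)) (Set.range es) (Set.range vs) := by
  induction n with
  | zero =>
    have h₁ : Set.range es = ∅ := Set.range_eq_empty es
    have h₂ : Set.range vs = {vs 0} := by simp [Set.range_unique]
    rw [h₁, h₂]
    exact .nil _
  | succ n ih =>
    have htail : G.IsPath (fun i => vs i.succ) (fun i => es i.succ) :=
      ⟨h.1.comp (Fin.succ_injective _), h.2.1.comp (Fin.succ_injective _), fun i => h.2.2 i.succ⟩
    have h₁ : Set.range es = insert (es 0) (Set.range fun i : Fin n => es i.succ) :=
      Fin.range_fin_succ es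
    have h₂ : Set.range vs = insert (vs 0) (Set.range fun i : Fin (n + 1) => vs i.succ) :=
      Fin.range_fin_succ vs
    rw [h₁, h₂]
    refine .cons (h.2.2 0) ?_ (ih htail)
    rintro ⟨i, hi⟩
    exact Fin.succ_ne_zero i (h.1 hi)

/-- Two paths with the same distinct ends, sharing no edge and no inner vertex, form a cycle. -/
theorem IsPathOn.isCycle_union [Finite E] {a b : V} {F F' : Set E} {T T' : Set V}
    (h : G.IsPathOn a b F T) (h' : G.IsPathOn a b F' T') (hab : a ≠ b) (hF : Disjoint F F')
    (hT : ∀ v ∈ T, v ∈ T' → v = a ∨ v = b) : G.IsCycle (F ∪ F') := by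
  have hmem : ∀ v, G.touches (F ∪ F') v → v ∈ T ∨ v ∈ T' := by
    rintro v ⟨e, he | he, hv⟩
    · exact Or.inl (h.mem_of_touches ⟨e, he, hv⟩)
    · exact Or.inr (h'.mem_of_touches ⟨e, he, hv⟩)
  have hreach : ∀ v, G.touches (F ∪ F') v → G.Reaches (· ∈ F ∪ F') a v := by
    intro v hv
    rcases hmem v hv with hv | hv
    · exact (h.reaches hv).mono fun _ => Or.inl
    · exact (h'.reaches hv).mono fun _ => Or.inr
  refine ⟨?_, fun v hv => ?_, fun u v hu hv => (hreach u hu).symm.trans (hreach v hv)⟩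
  · cases h with
    | nil => exact absurd rfl hab
    | cons => exact ⟨_, Or.inl (Set.mem_insert _ _)⟩
  · change G.degreeIn (F ∪ F') v = 2
    rw [degreeIn_union hF]
    have hd := h.degreeIn_add v
    have hd' := h'.degreeIn_add v
    have := hmem v hv
    have := hT v
    grind

end Multigraph

/-- Let `G` be a 3-edge-connected cubic graph, `X ⊆ V` with `G[X]` connected, `H` a
component of `G − X` (vertex set `W`), and `P ⊆ H` a nontrivial path with ends
`y₁ = vs 0`, `y₂ = vs (last (n+1))` that is peripheral in `H`, whose ends each send an
edge to `X` and whose other vertices send no edge to `X`. Then there is a peripheral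
cycle `C` of `G` with `C ∩ H = P`. -/
theorem peripheral_cycle_extension {V E : Type} [Fintype V] [Fintype E]
    (G : Multigraph V E) (hG : G.EdgeConnected 3) (hcubic : G.Cubic)
    (X : Set V) (hXne : X.Nonempty) (hXconn : G.ConnectedOn X fun _ => True)
    (W : Set V) (hW : G.IsComponent X W)
    (n : ℕ) (vs : Fin (n + 1 + 1) → V) (es : Fin (n + 1) → E)
    (hP : G.IsPath vs es) (hPW : ∀ i, vs i ∈ W)
    (hper : G.ConnectedOn W (fun e => e ∉ Set.range es))
    (hy₁ : ∃ e : E, G.joins e (vs 0) X)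
    (hy₂ : ∃ e : E, G.joins e (vs (Fin.last (n + 1))) X)
    (hmid : ∀ i : Fin (n + 1 + 1), i ≠ 0 → i ≠ Fin.last (n + 1) →
      ∀ e : E, ¬ G.joins e (vs i) X) :
    ∃ C : Set E, G.IsCycle C ∧ G.Peripheral C ∧
      C ∩ {e : E | G.src e ∈ W ∧ G.tgt e ∈ W} = Set.range es := by
  obtain ⟨e₁, he₁⟩ := hy₁
  obtain ⟨e₂, he₂⟩ := hy₂
  have hWX : ∀ x ∈ X, x ∉ W := fun x hx hw => Set.disjoint_left.1 hW.2.1 hw hx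
  have hne : vs 0 ≠ vs (Fin.last (n + 1)) := fun h => Fin.last_pos.ne (hP.1 h)
  let M : Set E := {e | e = e₁ ∨ e = e₂ ∨ (G.src e ∉ W ∧ G.tgt e ∉ W)}
  have hPW' : ∀ e ∈ Set.range es, G.src e ∈ W ∧ G.tgt e ∈ W := by
    rintro _ ⟨i, rfl⟩
    rcases hP.2.2 i with ⟨h, h'⟩ | ⟨h, h'⟩ <;> rw [h, h'] <;> exact ⟨hPW _, hPW _⟩
  have hMW : ∀ e ∈ M, ¬(G.src e ∈ W ∧ G.tgt e ∈ W) := by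
    have key : ∀ e y, G.joins e y X → ¬(G.src e ∈ W ∧ G.tgt e ∈ W) := by
      rintro e y (⟨-, h⟩ | ⟨-, h⟩) ⟨hs, ht⟩
      · exact hWX _ h ht
      · exact hWX _ h hs
    rintro e (rfl | rfl | h)
    · exact key _ _ he₁
    · exact key _ _ he₂
    · exact fun h' => h.1 h'.1
  have hlink : G.Reaches (· ∈ M) (vs 0) (vs (Fin.last (n + 1))) := by
    obtain ⟨x₁, hx₁, h₁⟩ := he₁.exists_adjVia (P := (· ∈ M)) (Or.inl rfl)
    obtain ⟨x₂, hx₂, h₂⟩ := he₂.exists_adjVia (P := (· ∈ M)) (Or.inr (Or.inl rfl))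
    refine .head h₁ (.tail ?_ h₂.symm)
    exact (hXconn x₁ hx₁ x₂ hx₂).mono
      fun e he => Or.inr (Or.inr ⟨hWX _ he.2.1, hWX _ he.2.2⟩)
  obtain ⟨Q, hQM, hQ, hQper⟩ := Multigraph.exists_peripheral_link hG (hPW 0) hPW' hper
    (fun e hs ht => Or.inr (Or.inr ⟨hs, ht⟩)) hMW hlink
  obtain ⟨F, hFQ, T, hF⟩ := hQ.exists_isPathOn
  have hFM : F ⊆ M := hFQ.trans hQM
  refine ⟨Set.range es ∪ F, ?_, ?_, ?_⟩
  · refine hP.isPathOn.isCycle_union hF hne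
      (Set.disjoint_left.2 fun e he heF => hMW e (hFM heF) (hPW' e he)) ?_
    rintro _ ⟨i, rfl⟩ hT
    by_contra! hends
    have hdeg := hF.degreeIn_add (vs i)
    rw [if_pos hT, if_neg hends.1.symm, if_neg hends.2.symm] at hdeg
    obtain ⟨e, he, hev⟩ := Multigraph.touches_of_degreeIn_ne_zero
      (G := G) (F := F) (v := vs i) (by omega)
    have hiW := hPW i
    have key : ∀ y, G.joins e y X → vs i = y := by
      rintro y (⟨rfl, h⟩ | ⟨rfl, h⟩)
      · rcases hev with hev | hev
        · exact hev.symm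
        · exact absurd (hev ▸ hiW) (hWX _ h)
      · rcases hev with hev | hev
        · exact absurd (hev ▸ hiW) (hWX _ h)
        · exact hev.symm
    rcases hFM he with rfl | rfl | h
    · exact hends.1 (key _ he₁)
    · exact hends.2 (key _ he₂)
    · rcases hev with hev | hev
      · exact h.1 (hev ▸ hiW)
      · exact h.2 (hev ▸ hiW)
  · exact ⟨hQper.1, fun u v => (hQper.2 u v).mono
      fun e he h => he (h.imp_right fun h => hFQ h)⟩
  · ext e
    refine ⟨?_, fun he => ⟨Or.inl he, hPW' e he⟩⟩
    rintro ⟨he | he, hW'⟩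
    · exact he
    · exact absurd hW' (hMW e (hFM he))
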